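/- Let k be an algebraically closed field of characteristic 2, let K be the fraction field of the polynomial ring k[u, v, w] in three variables, and let F be the intermediate field of K over k generated by the three elements u², v + uw, and w² + u. Then the field extension K/F is purely inseparable of degree 4, i.e., [K : F] = 4 and every element of K has its 4-th power in F. -/

import Mathlib

/-!
Put `b = v + u w` and `c = w ^ p + u`, where `p` is the characteristic exponent of `k`. Then `b`,
`c` and `w` generate `K`, so by transcendence degree `w` is transcendental over `E = k(b, c)`. Since
`c ^ p = w ^ (p ^ 2) + u ^ p`, the field `F` is `E(w ^ (p ^ 2))`. Thus `K / F` is the extension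
`E(w) / E(w ^ (p ^ 2))`, of degree `p ^ 2`, and the `p ^ 2`-power map sends `E(w)` into
`E(w ^ (p ^ 2))`.
-/

open IntermediateField
open scoped Cardinal

section FractionField

variable {k A K : Type*} [Field k] [CommRing A] [Algebra k A] [Field K] [Algebra k K] [Algebra A K]
  [IsScalarTower k A K] [IsFractionRing A K]

theorem adjoin_image_algebraMap_eq_top_of_isFractionRing {s : Set A}
    (hs : Algebra.adjoin k s = ⊤) : adjoin k (algebraMap A K '' s) = ⊤ := by
  have algebraMap_mem (a : A) : algebraMap A K a ∈ adjoin k (algebraMap A K '' s) := by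
    have ha : a ∈ Algebra.adjoin k s := hs ▸ Algebra.mem_top
    apply algebra_adjoin_le_adjoin
    rw [Algebra.adjoin_algebraMap]
    exact ⟨a, ha, rfl⟩
  refine eq_top_iff.2 fun x _ ↦ ?_
  obtain ⟨a, b, -, rfl⟩ := IsFractionRing.div_surjective A x
  exact div_mem (algebraMap_mem a) (algebraMap_mem b)

theorem trdeg_fractionRing_mvPolynomial (σ R : Type*) [CommRing R] [IsDomain R] :
    Algebra.trdeg R (FractionRing (MvPolynomial σ R)) = Cardinal.lift #σ := by
  have : Algebra.IsAlgebraic (MvPolynomial σ R) (FractionRing (MvPolynomial σ R)) :=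
    IsLocalization.isAlgebraic _ (nonZeroDivisors (MvPolynomial σ R))
  rw [← trdeg_add_eq R (S := MvPolynomial σ R),
    trdeg_eq_zero (R := MvPolynomial σ R), add_zero, MvPolynomial.trdeg_of_isDomain]

end FractionField

section SimpleTranscendental

variable {k K : Type*} [Field k] [Field K] [Algebra k K]

open Polynomial in
theorem relfinrank_adjoin_aeval_adjoin {x : K} (hx : Transcendental k x) (f : k[X]) :
    relfinrank k⟮aeval x f⟯ k⟮x⟯ = f.natDegree := by
  let φ : RatFunc k →ₐ[k] K := k⟮x⟯.val.comp (RatFunc.algEquivOfTranscendental x hx)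
  have map_adjoin (g : k[X]) : (k⟮algebraMap k[X] (RatFunc k) g⟯).map φ = k⟮aeval x g⟯ := by
    rw [adjoin_map, Set.image_singleton]
    simp [φ]
  have map_top : (⊤ : IntermediateField k (RatFunc k)).map φ = k⟮x⟯ := by
    simpa [RatFunc.adjoin_X] using map_adjoin X
  rw [← map_adjoin, ← map_top, relfinrank_map_map, relfinrank_top_right,
    RatFunc.finrank_eq_max_natDegree]
  simp

theorem adjoin_adjoin_simple_eq_top {s : Set K} {x : K} (htop : adjoin k (insert x s) = ⊤) :
    (adjoin k s)⟮x⟯ = ⊤ := by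
  rw [← restrictScalars_eq_top_iff (K := k), adjoin_adjoin_left, Set.union_singleton, htop]

theorem transcendental_of_adjoin_insert_eq_top {s : Set K} {x : K} (hs : #s < Algebra.trdeg k K)
    (htop : adjoin k (insert x s) = ⊤) : Transcendental (adjoin k s) x := by
  intro hx
  have : Algebra.IsAlgebraic (adjoin k s) K := by
    have := isAlgebraic_adjoin_simple hx.isIntegral
    rw [adjoin_adjoin_simple_eq_top htop] at this
    exact topEquiv.isAlgebraic
  have : Algebra.IsAlgebraic (Algebra.adjoin k s) K := isAlgebraic_adjoin_iff_top.1 this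
  exact hs.not_ge (Algebra.IsAlgebraic.trdeg_le_cardinalMk k s)

theorem finrank_adjoin_insert_pow {s : Set K} {x : K} (hs : #s < Algebra.trdeg k K)
    (htop : adjoin k (insert x s) = ⊤) (n : ℕ) :
    Module.finrank (adjoin k (insert (x ^ n) s)) K = n := by
  have finrank_simple : Module.finrank (adjoin k s)⟮x ^ n⟯ K = n := by
    simpa [adjoin_adjoin_simple_eq_top htop] using
      relfinrank_adjoin_aeval_adjoin (transcendental_of_adjoin_insert_eq_top hs htop)
        (Polynomial.X ^ n)
  rw [← Set.union_singleton, ← adjoin_adjoin_left]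
  exact finrank_simple

end SimpleTranscendental

section ExponentialCharacteristic

variable {k K : Type*} [Field k] [Field K] [Algebra k K] (p : ℕ) [ExpChar k p]

theorem pow_expChar_pow_mem_of_adjoin_eq_top {s : Set K} (htop : adjoin k s = ⊤)
    {F : IntermediateField k K} {n : ℕ} (hs : ∀ x ∈ s, x ^ p ^ n ∈ F) (y : K) :
    y ^ p ^ n ∈ F := by
  have : ExpChar K p := expChar_of_injective_algebraMap (algebraMap k K).injective p
  have hy : y ∈ adjoin k s := htop ▸ mem_top
  induction hy using adjoin_induction with
  | mem x hx => exact hs x hx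
  | algebraMap a => exact pow_mem (F.algebraMap_mem a) _
  | add x y _ _ hx hy => simpa only [add_pow_expChar_pow] using add_mem hx hy
  | inv x _ hx => simpa only [inv_pow] using inv_mem hx
  | mul x y _ _ hx hy => simpa only [mul_pow] using mul_mem hx hy

theorem pow_expChar_pow_mem_adjoin_insert_pow {s : Set K} {x : K}
    (htop : adjoin k (insert x s) = ⊤) (n : ℕ) (y : K) :
    y ^ p ^ n ∈ adjoin k (insert (x ^ p ^ n) s) := by
  refine pow_expChar_pow_mem_of_adjoin_eq_top p htop ?_ y
  rintro z (rfl | hz)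
  · exact mem_adjoin_of_mem k (Set.mem_insert _ _)
  · exact pow_mem (mem_adjoin_of_mem k (Set.mem_insert_of_mem _ hz)) _

end ExponentialCharacteristic

section Generators

variable {k K : Type*} [Field k] [Field K] [Algebra k K]

theorem adjoin_insert_le_of_add_mem {s : Set K} {x y : K} (hxy : x + y ∈ adjoin k s) :
    adjoin k (insert x s) ≤ adjoin k (insert y s) := by
  have hs : s ⊆ adjoin k (insert y s) := (Set.subset_insert y s).trans (subset_adjoin k _)
  have hy : y ∈ adjoin k (insert y s) := mem_adjoin_of_mem k (Set.mem_insert y s)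
  have hx : x ∈ adjoin k (insert y s) :=
    (add_mem_cancel_right hy).1 (adjoin_le_iff.2 hs hxy)
  exact adjoin_le_iff.2 (Set.insert_subset hx hs)

theorem adjoin_insert_eq_of_add_mem {s : Set K} {x y : K} (hxy : x + y ∈ adjoin k s) :
    adjoin k (insert x s) = adjoin k (insert y s) :=
  (adjoin_insert_le_of_add_mem hxy).antisymm (adjoin_insert_le_of_add_mem (add_comm x y ▸ hxy))

theorem adjoin_pow_expChar_eq_adjoin_pow_sq (p : ℕ) [ExpChar k p] (u b w : K) :
    adjoin k {u ^ p, b, w ^ p + u} = adjoin k {w ^ p ^ 2, b, w ^ p + u} := by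
  have : ExpChar K p := expChar_of_injective_algebraMap (algebraMap k K).injective p
  have frobenius_add : u ^ p + w ^ p ^ 2 = (w ^ p + u) ^ p := by
    rw [add_pow_expChar, ← pow_mul, ← sq, add_comm]
  apply adjoin_insert_eq_of_add_mem
  rw [frobenius_add]
  exact pow_mem (mem_adjoin_of_mem k (by simp)) p

theorem adjoin_triple_le_adjoin_triangular (n : ℕ) (u v w : K) :
    adjoin k {u, v, w} ≤ adjoin k {w, v + u * w, w ^ n + u} := by
  set L := adjoin k {w, v + u * w, w ^ n + u}
  have hw : w ∈ L := mem_adjoin_of_mem k (by simp)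
  have hb : v + u * w ∈ L := mem_adjoin_of_mem k (by simp)
  have hc : w ^ n + u ∈ L := mem_adjoin_of_mem k (by simp)
  have hu : u ∈ L := (add_mem_cancel_left (pow_mem hw n)).1 hc
  have hv : v ∈ L := (add_mem_cancel_right (mul_mem hu hw)).1 hb
  rw [adjoin_le_iff]
  rintro _ (rfl | rfl | rfl)
  exacts [hu, hv, hw]

end Generators

open MvPolynomial in
theorem stmt9_general (k : Type*) [Field k] (p : ℕ) [ExpChar k p] :
    let K := FractionRing (MvPolynomial (Fin 3) k)
    let u : K := algebraMap (MvPolynomial (Fin 3) k) K (X 0)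
    let v : K := algebraMap (MvPolynomial (Fin 3) k) K (X 1)
    let w : K := algebraMap (MvPolynomial (Fin 3) k) K (X 2)
    let F : IntermediateField k K :=
      IntermediateField.adjoin k {u ^ p, v + u * w, w ^ p + u}
    Module.finrank F K = p ^ 2 ∧ ∀ x : K, x ^ p ^ 2 ∈ F := by
  intro K u v w F
  have htop : adjoin k {w, v + u * w, w ^ p + u} = ⊤ := by
    have huvw : adjoin k {u, v, w} = ⊤ := by
      have := adjoin_image_algebraMap_eq_top_of_isFractionRing (K := K)
        (MvPolynomial.adjoin_range_X (R := k) (σ := Fin 3))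
      simpa [Fin.range_fin_succ, Fin.tail, Set.image_insert_eq] using this
    exact top_unique (huvw ▸ adjoin_triple_le_adjoin_triangular p u v w)
  have hcard : #({v + u * w, w ^ p + u} : Set K) < Algebra.trdeg k K :=
    calc #({v + u * w, w ^ p + u} : Set K) ≤ 1 + 1 := by
          simpa only [Cardinal.mk_singleton] using
            Cardinal.mk_insert_le (s := {w ^ p + u}) (a := v + u * w)
      _ < 3 := by norm_num
      _ = Algebra.trdeg k K := by simp [K, trdeg_fractionRing_mvPolynomial]
  have hF : F = adjoin k {w ^ p ^ 2, v + u * w, w ^ p + u} :=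
    adjoin_pow_expChar_eq_adjoin_pow_sq p u (v + u * w) w
  rw [hF]
  exact ⟨finrank_adjoin_insert_pow hcard htop (p ^ 2),
    pow_expChar_pow_mem_adjoin_insert_pow p htop 2⟩

open MvPolynomial in
/-- Let `k` be an algebraically closed field of characteristic 2, `K = k(u, v, w)` a
rational function field in three variables, and `F = k(u², v + uw, w² + u)`. Then `K/F`
is purely inseparable of degree 4: `[K : F] = 4` and every `x ∈ K` has `x⁴ ∈ F`. -/
theorem stmt9 (k : Type*) [Field k] [IsAlgClosed k] [CharP k 2] :
    let K := FractionRing (MvPolynomial (Fin 3) k)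
    let u : K := algebraMap (MvPolynomial (Fin 3) k) K (X 0)
    let v : K := algebraMap (MvPolynomial (Fin 3) k) K (X 1)
    let w : K := algebraMap (MvPolynomial (Fin 3) k) K (X 2)
    let F : IntermediateField k K :=
      IntermediateField.adjoin k {u ^ 2, v + u * w, w ^ 2 + u}
    Module.finrank F K = 4 ∧ ∀ x : K, x ^ 4 ∈ F :=
  stmt9_general k 2
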